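/- For every natural number n, the Catalan number satisfies: C_n ≡ (−1)^{δ_3^*(n+1)} (mod 3) if n + 1 ∈ T^*(01), and C_n ≡ 0 (mod 3) otherwise. -/

import Mathlib

/-- `T*(01)`: the natural numbers all of whose base-3 digits except possibly the
least significant one are `0` or `1`. -/
def T01star : Set ℕ := {n | ∀ d ∈ (Nat.digits 3 n).tail, d = 0 ∨ d = 1}

/-- `δ_3^* n`: the number of base-3 digits of `n`, excluding the least significant
one, that are equal to `1`. -/
def delta3star (n : ℕ) : ℕ := ((Nat.digits 3 n).tail).count 1

/-! By Lucas' theorem, the central binomial coefficients `B n` are, modulo a prime `p`,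
multiplicative over base-`p` digits; for `p = 3` the digits `0`, `1`, `2` contribute `1`, `-1`, `0`.
Since `2 * C n = 4 * B n - B (n + 1)`, we have `C n ≡ B (n + 1) - B n (mod 3)`, and by Lucas again
this difference is `B ((n + 1) / 3)` whatever the last digit of `n` is. -/

lemma tail_digits_eq_digits_div {b : ℕ} (hb : 1 < b) (n : ℕ) :
    (b.digits n).tail = b.digits (n / b) := by
  rcases eq_or_ne n 0 with rfl | hn
  · simp
  · rw [Nat.digits_eq_cons_digits_div hb hn, List.tail_cons]

section Lucas

variable {p : ℕ} [hp : Fact p.Prime]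

lemma prime_dvd_centralBinom_of_lt_of_le_two_mul {n : ℕ} (hlt : n < p) (hle : p ≤ 2 * n) :
    p ∣ n.centralBinom := by
  rw [two_mul] at hle
  rw [Nat.centralBinom_eq_two_mul_choose, two_mul]
  exact hp.out.dvd_choose_add hlt hlt hle

lemma centralBinom_modEq_mul_centralBinom_div (n : ℕ) :
    n.centralBinom ≡ (n % p).centralBinom * (n / p).centralBinom [MOD p] := by
  have lucas : n.centralBinom ≡
      (2 * n % p).choose (n % p) * (2 * n / p).choose (n / p) [MOD p] :=
    Choose.choose_modEq_choose_mod_mul_choose_div_nat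
  have hlt : n % p < p := Nat.mod_lt n hp.out.pos
  have two_mul_eq : 2 * n = 2 * (n % p) + p * (2 * (n / p)) := by
    linear_combination 2 * (Nat.mod_add_div n p).symm
  have two_mul_mod : 2 * n % p = 2 * (n % p) % p := by simp
  rcases lt_or_ge (2 * (n % p)) p with no_carry | carry
  · have two_mul_div : 2 * n / p = 2 * (n / p) := by
      rw [two_mul_eq, Nat.add_mul_div_left _ _ hp.out.pos, Nat.div_eq_of_lt no_carry, zero_add]
    rwa [two_mul_mod, Nat.mod_eq_of_lt no_carry, two_mul_div] at lucas
  · -- Doubling the last digit carries, so both sides vanish modulo `p`.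
    have left_zero : (2 * n % p).choose (n % p) = 0 := by
      apply Nat.choose_eq_zero_of_lt
      rw [two_mul_mod, Nat.mod_eq_sub_mod carry, Nat.mod_eq_of_lt] <;> omega
    have right_dvd : p ∣ (n % p).centralBinom :=
      prime_dvd_centralBinom_of_lt_of_le_two_mul hlt carry
    rw [left_zero, zero_mul] at lucas
    exact lucas.trans (right_dvd.mul_right _).modEq_zero_nat.symm

lemma centralBinom_modEq_prod_digits (n : ℕ) :
    n.centralBinom ≡ ((p.digits n).map Nat.centralBinom).prod [MOD p] := by
  induction n using Nat.strong_induction_on with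
  | _ n ih =>
    rcases eq_or_ne n 0 with rfl | hn
    · simp [Nat.ModEq.refl]
    · rw [Nat.digits_eq_cons_digits_div hp.out.one_lt hn, List.map_cons, List.prod_cons]
      exact (centralBinom_modEq_mul_centralBinom_div n).trans
        ((ih _ (Nat.div_lt_self hn.bot_lt hp.out.one_lt)).mul_left _)

lemma centralBinom_modEq_two_pow_count_digits {n : ℕ} (hn : ∀ d ∈ p.digits n, d = 0 ∨ d = 1) :
    n.centralBinom ≡ 2 ^ (p.digits n).count 1 [MOD p] := by
  have prod_eq : ((p.digits n).map Nat.centralBinom).prod = 2 ^ (p.digits n).count 1 := by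
    refine List.prod_map_eq_pow_single 1 _ fun d hd hmem => ?_
    rw [(hn d hmem).resolve_right hd, Nat.centralBinom_zero]
  exact prod_eq ▸ centralBinom_modEq_prod_digits n

lemma prime_dvd_centralBinom_of_mem_digits {n d : ℕ} (hd : d ∈ p.digits n) (hle : p ≤ 2 * d) :
    p ∣ n.centralBinom := by
  have dvd_digit : p ∣ d.centralBinom :=
    prime_dvd_centralBinom_of_lt_of_le_two_mul (Nat.digits_lt_base hp.out.one_lt hd) hle
  exact ((centralBinom_modEq_prod_digits n).dvd_iff dvd_rfl).2
    (dvd_digit.trans (List.dvd_prod (List.mem_map_of_mem hd)))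

end Lucas

lemma centralBinom_modEq_neg_one_pow_count_digits {n : ℕ}
    (hn : ∀ d ∈ Nat.digits 3 n, d = 0 ∨ d = 1) :
    (n.centralBinom : ℤ) ≡ (-1) ^ (Nat.digits 3 n).count 1 [ZMOD 3] := by
  have two_pow : (n.centralBinom : ℤ) ≡ 2 ^ (Nat.digits 3 n).count 1 [ZMOD 3] :=
    mod_cast centralBinom_modEq_two_pow_count_digits hn
  have two_modEq : (2 : ℤ) ≡ -1 [ZMOD 3] := rfl
  exact two_pow.trans (two_modEq.pow _)

lemma three_dvd_centralBinom_of_not_forall_digits {n : ℕ}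
    (hn : ¬ ∀ d ∈ Nat.digits 3 n, d = 0 ∨ d = 1) : 3 ∣ n.centralBinom := by
  push Not at hn
  obtain ⟨d, hd, d_ne_zero, d_ne_one⟩ := hn
  exact prime_dvd_centralBinom_of_mem_digits hd (by omega)

lemma two_mul_catalan_add_centralBinom_succ (n : ℕ) :
    2 * catalan n + (n + 1).centralBinom = 4 * n.centralBinom := by
  apply Nat.eq_of_mul_eq_mul_left n.succ_pos
  have catalan_eq := succ_mul_catalan_eq_centralBinom n
  have centralBinom_eq := Nat.succ_mul_centralBinom_succ n
  rw [Nat.succ_eq_add_one]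
  linear_combination 2 * catalan_eq + centralBinom_eq

lemma catalan_add_centralBinom_modEq_three (n : ℕ) :
    catalan n + n.centralBinom ≡ (n + 1).centralBinom [MOD 3] := by
  have catalan_eq := two_mul_catalan_add_centralBinom_succ n
  rw [Nat.ModEq]
  omega

lemma catalan_modEq_centralBinom_succ_div_three (n : ℕ) :
    catalan n ≡ ((n + 1) / 3).centralBinom [MOD 3] := by
  have catalan_add := catalan_add_centralBinom_modEq_three n
  have lucas {m d : ℕ} (hd : m % 3 = d) :
      m.centralBinom ≡ d.centralBinom * (m / 3).centralBinom [MOD 3] :=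
    hd ▸ centralBinom_modEq_mul_centralBinom_div m
  have last_digit : n % 3 = 0 ∨ n % 3 = 1 ∨ n % 3 = 2 := by omega
  generalize hq : (n + 1) / 3 = q
  rcases last_digit with h | h | h
  · have div_eq : n / 3 = q := by omega
    have self_modEq : n.centralBinom ≡ 1 * q.centralBinom [MOD 3] := div_eq ▸ lucas h
    have succ_modEq : (n + 1).centralBinom ≡ 2 * q.centralBinom [MOD 3] :=
      hq ▸ lucas (d := 1) (by omega)
    rw [Nat.ModEq] at *
    omega
  · have div_eq : n / 3 = q := by omega
    have self_modEq : n.centralBinom ≡ 2 * q.centralBinom [MOD 3] := div_eq ▸ lucas h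
    have succ_modEq : (n + 1).centralBinom ≡ 6 * q.centralBinom [MOD 3] :=
      hq ▸ lucas (d := 2) (by omega)
    rw [Nat.ModEq] at *
    omega
  · have self_modEq : n.centralBinom ≡ 6 * (n / 3).centralBinom [MOD 3] := lucas h
    have succ_modEq : (n + 1).centralBinom ≡ 1 * q.centralBinom [MOD 3] :=
      hq ▸ lucas (d := 0) (by omega)
    rw [Nat.ModEq] at *
    omega

lemma mem_T01star_iff_digits_div {n : ℕ} :
    n ∈ T01star ↔ ∀ d ∈ Nat.digits 3 (n / 3), d = 0 ∨ d = 1 := by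
  rw [← tail_digits_eq_digits_div (by norm_num)]
  rfl

lemma delta3star_eq_count_digits_div (n : ℕ) :
    delta3star n = (Nat.digits 3 (n / 3)).count 1 := by
  rw [delta3star, tail_digits_eq_digits_div (by norm_num)]

/-- Catalan numbers mod 3: `C n ≡ (-1)^{δ_3^*(n+1)} (mod 3)` if `n + 1 ∈ T^*(01)`,
and `C n ≡ 0 (mod 3)` otherwise. -/
theorem catalan_mod_three (n : ℕ) :
    (n + 1 ∈ T01star → (catalan n : ℤ) ≡ (-1) ^ delta3star (n + 1) [ZMOD 3]) ∧
    (n + 1 ∉ T01star → (catalan n : ℤ) ≡ 0 [ZMOD 3]) := by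
  have catalan_modEq : (catalan n : ℤ) ≡ ((n + 1) / 3).centralBinom [ZMOD 3] :=
    Int.natCast_modEq_iff.2 (catalan_modEq_centralBinom_succ_div_three n)
  rw [mem_T01star_iff_digits_div, delta3star_eq_count_digits_div]
  refine ⟨fun digits_le_one => ?_, fun not_digits_le_one => ?_⟩
  · exact catalan_modEq.trans (centralBinom_modEq_neg_one_pow_count_digits digits_le_one)
  · have three_dvd := three_dvd_centralBinom_of_not_forall_digits not_digits_le_one
    exact catalan_modEq.trans (Int.natCast_modEq_iff.2 three_dvd.modEq_zero_nat)
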